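/- Let T ∈ B_{(r)}(n,m) be a one-row lexicographic bitableau, and let (P,Q) = RSK(T). For 1 ≤ i ≤ m−1, define the bottom lowering operator F_i^b(T): apply the i-bracketing rule to w(T); if some letter i is unmatched, change the second coordinate of the box corresponding to the rightmost unmatched i from i to i+1 and re-sort the multiset of pairs into lexicographically weakly increasing order; otherwise F_i^b(T) is undefined. For 1 ≤ j ≤ n−1, define the top lowering operator F_j^t(T) analogously using the j-bracketing of u(T) and changing the first coordinate of the selected box from j to j+1, then re-sorting lexicographically. Let f_i denote the standard tableau lowering operator on semistandard Young tableaux (apply the i-bracketing rule to the row reading word, read rows bottom to top and left to right within rows, and change the rightmost unmatched i to i+1). Then: F_i^b(T) is defined if and only if f_i(P) is defined, and in that case F_i^b(T) ∈ B_{(r)}(n,m) and RSK(F_i^b(T)) = (f_i(P), Q); similarly F_j^t(T) is defined if and only if f_j(Q) is defined, and in that case F_j^t(T) ∈ B_{(r)}(n,m) and RSK(F_j^t(T)) = (P, f_j(Q)). (Thus RSK is an isomorphism of gl_n×gl_m-crystals on one-row bitableaux.) -/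

import Mathlib

/-- Lexicographic (weak) order on pairs: `(a,b) ≤ (a',b')` iff `a < a'`, or `a = a'` and `b ≤ b'`. -/
def lexLe (p q : ℕ × ℕ) : Prop := p.1 < q.1 ∨ (p.1 = q.1 ∧ p.2 ≤ q.2)

/-- Lexicographic strict order on pairs. -/
def lexLt (p q : ℕ × ℕ) : Prop := p.1 < q.1 ∨ (p.1 = q.1 ∧ p.2 < q.2)

instance : DecidableRel lexLe := fun p q =>
  inferInstanceAs (Decidable (p.1 < q.1 ∨ (p.1 = q.1 ∧ p.2 ≤ q.2)))

instance : DecidableRel lexLt := fun p q =>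
  inferInstanceAs (Decidable (p.1 < q.1 ∨ (p.1 = q.1 ∧ p.2 < q.2)))

/-- Row-insert the value `v` into the tableau `P` (a list of rows): `v` is appended at the end
of the first row if it is at least as large as every entry there; otherwise it replaces the
leftmost entry strictly larger than `v`, which is then inserted into the next row. -/
def insRow (v : ℕ) : List (List ℕ) → List (List ℕ)
  | [] => [[v]]
  | r :: rest =>
    match r.findIdx? (fun x => decide (v < x)) with
    | none => (r ++ [v]) :: rest
    | some idx => (r.set idx v) :: insRow (r.getD idx 0) rest

/-- The insertion tableau `P(w)` of a word: successively row-insert the letters of `w`,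
starting from the empty tableau. -/
def Pword (w : List ℕ) : List (List ℕ) :=
  w.foldl (fun t v => insRow v t) []

/-- The index of the row in which `p'` (the result of a row insertion into `p`) has one more
box than `p`. -/
def growIdx (p p' : List (List ℕ)) : ℕ :=
  (List.range p'.length).findIdx fun r => decide ((p.getD r []).length ≠ (p'.getD r []).length)

/-- Append the value `a` at the end of row `r` of the tableau `q`. -/
def addBox (q : List (List ℕ)) (r a : ℕ) : List (List ℕ) :=
  if r < q.length then q.set r (q.getD r [] ++ [a]) else q ++ [[a]]

/-- The RSK correspondence applied to a biword, given as a list of (top, bottom) pairs: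
the bottom entries are row-inserted in order to form the insertion tableau `P`, and the top
entries are recorded in the newly created boxes to form the recording tableau `Q`. -/
def rsk (w : List (ℕ × ℕ)) : List (List ℕ) × List (List ℕ) :=
  w.foldl (fun PQ ab =>
    let P' := insRow ab.2 PQ.1
    (P', addBox PQ.2 (growIdx PQ.1 P') ab.1)) ([], [])

/-- A word is Yamanouchi if for every `i ≥ 1`, every suffix contains at least as many letters
`i` as letters `i+1`. -/
def Yamanouchi (w : List ℕ) : Prop :=
  ∀ i : ℕ, 1 ≤ i → ∀ s ∈ w.tails, s.count (i + 1) ≤ s.count i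

/-- A one-row lexicographic bitableau in `B_{(r)}(n,m)`, encoded as its list of entries read
left to right: pairs in `{1,…,n} × {1,…,m}`, weakly increasing in lexicographic order. -/
def IsRowBitab (n m r : ℕ) (L : List (ℕ × ℕ)) : Prop :=
  L.length = r ∧ (∀ p ∈ L, (1 ≤ p.1 ∧ p.1 ≤ n) ∧ (1 ≤ p.2 ∧ p.2 ≤ m)) ∧ L.Chain' lexLe

/-- The sort-by-top reading word `w(T)` of a one-row bitableau: for `k = 1, …, n` in increasing
order, the second coordinates of the boxes with first coordinate `k`, read left to right. -/
def wRow (n : ℕ) (L : List (ℕ × ℕ)) : List ℕ :=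
  (List.range n).flatMap fun k => (L.filter fun p => decide (p.1 = k + 1)).map Prod.snd

/-- The reading word `u(T)` of a one-row bitableau: for `k = 1, …, m` in increasing order,
the first coordinates of the boxes with second coordinate `k`, read left to right. -/
def uRow (m : ℕ) (L : List (ℕ × ℕ)) : List ℕ :=
  (List.range m).flatMap fun k => (L.filter fun p => decide (p.2 = k + 1)).map Prod.fst

/-- Under the `i`-bracketing rule (letter `i` becomes `)`, letter `i+1` becomes `(`, others
ignored), the letter at position `p` of `w` is an unmatched `)` (letter `i`); equivalently,
every window of `w` ending at `p` contains strictly more letters `i` than letters `i+1`. -/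
def unmatchedClose (w : List ℕ) (i p : ℕ) : Bool :=
  decide (p < w.length) && decide (w.getD p 0 = i) &&
    (List.range (p + 1)).all fun q =>
      decide (((w.drop q).take (p + 1 - q)).count (i + 1) < ((w.drop q).take (p + 1 - q)).count i)

/-- The position of the rightmost unmatched letter `i` of `w` under the `i`-bracketing rule,
if there is one. -/
def rightUnmatched (w : List ℕ) (i : ℕ) : Option ℕ :=
  (List.range w.length).reverse.find? (unmatchedClose w i)

/-- Sort a list of pairs into lexicographically weakly increasing order. -/
def sortLex (L : List (ℕ × ℕ)) : List (ℕ × ℕ) := L.insertionSort lexLe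

/-- The row reading word of a tableau (a list of rows): rows are read bottom to top, left to
right within each row. -/
def rowWord (P : List (List ℕ)) : List ℕ := P.reverse.flatMap id

/-- The boxes `(row, column)` of a tableau in row reading order (bottom to top, left to right
within each row). -/
def rowWordBoxes (P : List (List ℕ)) : List (ℕ × ℕ) :=
  (List.range P.length).reverse.flatMap fun r =>
    (List.range (P.getD r []).length).map fun c => (r, c)

/-- The standard lowering operator `f_i` on semistandard Young tableaux: apply the
`i`-bracketing rule to the row reading word; if some letter `i` is unmatched, change the
rightmost unmatched `i` into `i+1` (in its box); otherwise undefined. -/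
def fLower (i : ℕ) (P : List (List ℕ)) : Option (List (List ℕ)) :=
  match rightUnmatched (rowWord P) i with
  | none => none
  | some p =>
    let rc := (rowWordBoxes P).getD p (0, 0)
    some (P.set rc.1 ((P.getD rc.1 []).set rc.2 (i + 1)))

/-- Positions (indices into `L`) of the boxes of a one-row bitableau in the reading order
of `w(T)`. -/
def wRowIdx (n : ℕ) (L : List (ℕ × ℕ)) : List ℕ :=
  (List.range n).flatMap fun k =>
    (List.range L.length).filter fun t => decide ((L.getD t (0, 0)).1 = k + 1)

/-- Positions (indices into `L`) of the boxes of a one-row bitableau in the reading order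
of `u(T)`. -/
def uRowIdx (m : ℕ) (L : List (ℕ × ℕ)) : List ℕ :=
  (List.range m).flatMap fun k =>
    (List.range L.length).filter fun t => decide ((L.getD t (0, 0)).2 = k + 1)

/-- The bottom lowering operator `F_i^b` on one-row bitableaux: apply the `i`-bracketing rule
to `w(T)`; if some letter `i` is unmatched, change the second coordinate of the box
corresponding to the rightmost unmatched `i` from `i` to `i+1` and re-sort the entries into
lexicographically weakly increasing order; otherwise undefined. -/
def Fbot (n i : ℕ) (L : List (ℕ × ℕ)) : Option (List (ℕ × ℕ)) :=
  match rightUnmatched (wRow n L) i with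
  | none => none
  | some p =>
    let t := (wRowIdx n L).getD p 0
    some (sortLex (L.set t ((L.getD t (0, 0)).1, i + 1)))

/-- The top lowering operator `F_j^t` on one-row bitableaux: apply the `j`-bracketing rule
to `u(T)`; if some letter `j` is unmatched, change the first coordinate of the box
corresponding to the rightmost unmatched `j` from `j` to `j+1` and re-sort the entries into
lexicographically weakly increasing order; otherwise undefined. -/
def Ftop (m j : ℕ) (L : List (ℕ × ℕ)) : Option (List (ℕ × ℕ)) :=
  match rightUnmatched (uRow m L) j with
  | none => none
  | some p =>
    let t := (uRowIdx m L).getD p 0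
    some (sortLex (L.set t (j + 1, (L.getD t (0, 0)).2)))

/-!
Attach to each box of the insertion tableau its recording entry. RSK then becomes a sequence of row
passes: a biword is inserted letter by letter into an empty row, and the bumped letters, each taking
along the recording entry of the letter that bumped it, form the biword for the next row.

Inserting a single letter `p` into a row `R` replaces the biword `R ++ [p]` by
`(bumped letter) ++ (new row)`. This plactic move keeps the number of unmatched brackets `(` and
commutes with the lowering operator, hence so does a whole row pass, and hence `f_i` on the
insertion tableau is `f_i` on the bottom row of the biword. Lowering never moves a recording entry.
On a lexicographic biword the result is still sorted, so this operator is `F_i^b`.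

The top operator is conjugate to the bottom one under exchanging the two coordinates of every box
and sorting, and this exchange swaps `P` and `Q`. The latter symmetry follows from a local fact:
inserting a letter by its bottom entry commutes with inserting another one by its top entry.
-/

section CrystalOperators

variable {α : Type*}

/-- The number of pending brackets `(` after reading the letter `x`, when `e` of them were pending
before it, under the `i`-bracketing rule. -/
def bracketStep (i e x : ℕ) : ℕ :=
  if x = i + 1 then e + 1 else if x = i then e - 1 else e

/-- The number of unmatched brackets `(` of the biword `w` preceded by `e` brackets `(`, under the
`i`-bracketing rule for the second coordinates. -/
def openBrackets (i e : ℕ) (w : List (α × ℕ)) : ℕ :=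
  w.foldl (fun e p => bracketStep i e p.2) e

/-- The crystal lowering operator `f_i` on the second coordinates of the biword `w`, bracketed as if
`w` were preceded by `e` brackets `(`: raise the rightmost unmatched `i` to `i + 1`. The parameter
`e` is what makes the operator computable on a concatenation, see `lowerWord_append`. -/
def lowerWord (i : ℕ) : ℕ → List (α × ℕ) → Option (List (α × ℕ))
  | _, [] => none
  | e, p :: w => ((lowerWord i (bracketStep i e p.2) w).map (p :: ·)).or
      (if p.2 = i ∧ e = 0 then some ((p.1, i + 1) :: w) else none)

/-- The lowering operator on a tensor product of two biwords, that is, on their concatenation with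
the point of division remembered. -/
def lowerTensor (i e : ℕ) (s : List (α × ℕ) × List (α × ℕ)) :
    Option (List (α × ℕ) × List (α × ℕ)) :=
  ((lowerWord i (openBrackets i e s.1) s.2).map (s.1, ·)).or ((lowerWord i e s.1).map (·, s.2))

@[simp] theorem openBrackets_nil (i e : ℕ) : openBrackets i e ([] : List (α × ℕ)) = e := rfl

@[simp] theorem openBrackets_cons (i e : ℕ) (p : α × ℕ) (w : List (α × ℕ)) :
    openBrackets i e (p :: w) = openBrackets i (bracketStep i e p.2) w := rfl

@[simp] theorem openBrackets_append (i e : ℕ) (u v : List (α × ℕ)) :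
    openBrackets i e (u ++ v) = openBrackets i (openBrackets i e u) v :=
  List.foldl_append

theorem lowerWord_append (i e : ℕ) (u v : List (α × ℕ)) :
    lowerWord i e (u ++ v) = ((lowerWord i (openBrackets i e u) v).map (u ++ ·)).or
      ((lowerWord i e u).map (· ++ v)) := by
  induction u generalizing e with
  | nil => simp [lowerWord]
  | cons p u ih =>
    simp only [List.cons_append, lowerWord, ih, openBrackets_cons, Option.map_or, Option.map_map,
      Option.or_assoc, Function.comp_def]
    split_ifs <;> rfl

theorem lowerWord_cons (i e : ℕ) (p : α × ℕ) (w : List (α × ℕ)) :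
    lowerWord i e (p :: w) = ((lowerWord i (bracketStep i e p.2) w).map (p :: ·)).or
      ((lowerWord i e [p]).map (· ++ w)) :=
  lowerWord_append i e [p] w

theorem lowerWord_singleton (i e : ℕ) (p : α × ℕ) :
    lowerWord i e [p] = if p.2 = i ∧ e = 0 then some [(p.1, i + 1)] else none := by
  simp [lowerWord]

theorem exists_of_lowerWord_eq_some {i e : ℕ} {w w' : List (α × ℕ)}
    (h : lowerWord i e w = some w') :
    ∃ u a v, w = u ++ (a, i) :: v ∧ w' = u ++ (a, i + 1) :: v ∧ ∀ q ∈ v.head?, q.2 ≠ i := by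
  induction w generalizing e w' with
  | nil => simp [lowerWord] at h
  | cons p w ih =>
    rw [lowerWord, Option.or_eq_some_iff] at h
    rcases h with h | ⟨hw, h⟩
    · obtain ⟨w₁, hw₁, rfl⟩ := Option.map_eq_some_iff.1 h
      obtain ⟨u, a, v, rfl, rfl, hv⟩ := ih hw₁
      exact ⟨p :: u, a, v, rfl, rfl, hv⟩
    · obtain ⟨⟨rfl, rfl⟩, rfl⟩ := Option.ite_none_right_eq_some.1 h |>.imp_right Option.some.inj
      refine ⟨[], p.1, w, rfl, rfl, ?_⟩
      rcases w with _ | ⟨q, w⟩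
      · simp
      · rintro _ ⟨⟩ hq
        simp [lowerWord, bracketStep, hq] at hw

theorem map_fst_of_lowerWord_eq_some {i e : ℕ} {w w' : List (α × ℕ)}
    (h : lowerWord i e w = some w') : w'.map Prod.fst = w.map Prod.fst := by
  obtain ⟨u, a, v, rfl, rfl, -⟩ := exists_of_lowerWord_eq_some h
  simp

theorem isChain_of_lowerWord_eq_some {r : α × ℕ → α × ℕ → Prop} {i e : ℕ} {w w' : List (α × ℕ)}
    (raise_right : ∀ p a, r p (a, i) → r p (a, i + 1))
    (raise_left : ∀ a q, r (a, i) q → q.2 ≠ i → r (a, i + 1) q)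
    (hw : w.IsChain r) (h : lowerWord i e w = some w') : w'.IsChain r := by
  obtain ⟨u, a, v, rfl, rfl, hv⟩ := exists_of_lowerWord_eq_some h
  simp only [List.isChain_append, List.isChain_cons, List.head?_cons] at hw ⊢
  obtain ⟨hu, ⟨hav, hchain⟩, hua⟩ := hw
  refine ⟨hu, ⟨fun q hq => raise_left a q (hav q hq) (hv q hq), hchain⟩, ?_⟩
  rintro p hp _ ⟨⟩
  exact raise_right p a (hua p hp _ rfl)

theorem lowerWord_eq_none_of_forall_ne {i : ℕ} (e : ℕ) {w : List (α × ℕ)}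
    (h : ∀ p ∈ w, p.2 ≠ i) : lowerWord i e w = none := by
  by_contra hne
  obtain ⟨w', hw'⟩ := Option.ne_none_iff_exists'.1 hne
  obtain ⟨u, a, v, rfl, -, -⟩ := exists_of_lowerWord_eq_some hw'
  exact h (a, i) (by simp) rfl

theorem openBrackets_of_neutral {i : ℕ} (e : ℕ) {w : List (α × ℕ)}
    (h : ∀ p ∈ w, p.2 ≠ i ∧ p.2 ≠ i + 1) : openBrackets i e w = e := by
  induction w with
  | nil => rfl
  | cons p w ih =>
    obtain ⟨⟨hi, hi'⟩, hw⟩ := List.forall_mem_cons.1 h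
    simpa [bracketStep, hi, hi'] using ih hw

theorem openBrackets_of_forall_ne {i : ℕ} (e : ℕ) {w : List (α × ℕ)}
    (h : ∀ p ∈ w, p.2 ≠ i) : openBrackets i e w = e + (w.map Prod.snd).count (i + 1) := by
  induction w generalizing e with
  | nil => rfl
  | cons p w ih =>
    obtain ⟨hi, hw⟩ := List.forall_mem_cons.1 h
    rw [openBrackets_cons, ih _ hw, List.map_cons, List.count_cons, bracketStep, if_neg hi]
    by_cases hp : p.2 = i + 1 <;> simp [hp]; omega

theorem openBrackets_of_forall_ne_succ {i : ℕ} (e : ℕ) {w : List (α × ℕ)}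
    (h : ∀ p ∈ w, p.2 ≠ i + 1) : openBrackets i e w = e - (w.map Prod.snd).count i := by
  induction w generalizing e with
  | nil => rfl
  | cons p w ih =>
    obtain ⟨hi, hw⟩ := List.forall_mem_cons.1 h
    rw [openBrackets_cons, ih _ hw, List.map_cons, List.count_cons, bracketStep, if_neg hi]
    by_cases hp : p.2 = i <;> simp [hp]; omega

theorem lowerWord_eq_none_iff_of_forall_ne_succ {i : ℕ} (e : ℕ) {w : List (α × ℕ)}
    (h : ∀ p ∈ w, p.2 ≠ i + 1) :
    lowerWord i e w = none ↔ (w.map Prod.snd).count i ≤ e := by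
  induction w generalizing e with
  | nil => simp [lowerWord]
  | cons p w ih =>
    obtain ⟨hi, hw⟩ := List.forall_mem_cons.1 h
    rw [lowerWord, Option.or_eq_none_iff, Option.map_eq_none_iff, ih _ hw, List.map_cons,
      List.count_cons, bracketStep, if_neg hi]
    by_cases hp : p.2 = i <;> simp [hp]; omega

end CrystalOperators

section RowInsertion

variable {α : Type*}

/-- Weakly increasing second coordinates: the rows of a paired tableau have this property. -/
def IsRow (R : List (α × ℕ)) : Prop := R.Pairwise fun p q => p.2 ≤ q.2

/-- Row insertion of the second coordinate of `p` into a row whose boxes also carry recording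
entries, which keep their place. The first component of the result is the list of at most one
letter passed on to the next row: it carries the recording entry of `p`, since it is the new box
created further down that records it. -/
def rowInsert (p : α × ℕ) : List (α × ℕ) → List (α × ℕ) × List (α × ℕ)
  | [] => ([], [p])
  | x :: R => if p.2 < x.2 then ([(p.1, x.2)], (x.1, p.2) :: R)
      else ((rowInsert p R).1, x :: (rowInsert p R).2)

/-- Insert the letters of a biword successively into a row. The result is the biword passed on to
the next row, together with the final row. -/
def rowPass (R : List (α × ℕ)) : List (α × ℕ) → List (α × ℕ) × List (α × ℕ)
  | [] => ([], R)
  | p :: w =>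
      ((rowInsert p R).1 ++ (rowPass (rowInsert p R).2 w).1, (rowPass (rowInsert p R).2 w).2)

theorem rowInsert_append_of_le {p : α × ℕ} {U : List (α × ℕ)} (hU : ∀ x ∈ U, x.2 ≤ p.2)
    (V : List (α × ℕ)) : rowInsert p (U ++ V) = ((rowInsert p V).1, U ++ (rowInsert p V).2) := by
  induction U with
  | nil => rfl
  | cons x U ih =>
    obtain ⟨hx, hU⟩ := List.forall_mem_cons.1 hU
    simp [rowInsert, hx.not_gt, ih hU]

theorem rowInsert_of_le {p : α × ℕ} {R : List (α × ℕ)} (hR : ∀ x ∈ R, x.2 ≤ p.2) :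
    rowInsert p R = ([], R ++ [p]) := by
  simpa [rowInsert] using rowInsert_append_of_le hR []

theorem rowInsert_of_lt {p x : α × ℕ} {U : List (α × ℕ)} (hU : ∀ u ∈ U, u.2 ≤ p.2)
    (hx : p.2 < x.2) (V : List (α × ℕ)) :
    rowInsert p (U ++ x :: V) = ([(p.1, x.2)], U ++ (x.1, p.2) :: V) := by
  simp [rowInsert_append_of_le hU, rowInsert, hx]

theorem forall_le_or_exists_bumped (p : α × ℕ) (R : List (α × ℕ)) :
    (∀ x ∈ R, x.2 ≤ p.2) ∨
      ∃ U x V, R = U ++ x :: V ∧ (∀ u ∈ U, u.2 ≤ p.2) ∧ p.2 < x.2 := by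
  rcases h : R.find? (p.2 < ·.2) with _ | x
  · exact .inl (by simpa using h)
  · obtain ⟨hx, U, V, rfl, hU⟩ := List.find?_eq_some_iff_append.1 h
    exact .inr ⟨U, x, V, rfl, by simpa using hU, by simpa using hx⟩

theorem length_rowInsert_fst_le (p : α × ℕ) (R : List (α × ℕ)) :
    (rowInsert p R).1.length ≤ 1 := by
  rcases forall_le_or_exists_bumped p R with hR | ⟨U, x, V, rfl, hU, hx⟩
  · simp [rowInsert_of_le hR]
  · simp [rowInsert_of_lt hU hx]

theorem length_rowPass_fst_le (R w : List (α × ℕ)) : (rowPass R w).1.length ≤ w.length := by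
  induction w generalizing R with
  | nil => simp [rowPass]
  | cons p w ih =>
    have := ih (rowInsert p R).2
    have := length_rowInsert_fst_le p R
    simp only [rowPass, List.length_append, List.length_cons]
    omega

theorem rowPass_singleton (R : List (α × ℕ)) (p : α × ℕ) : rowPass R [p] = rowInsert p R := by
  simp [rowPass]

theorem rowPass_append (R v w : List (α × ℕ)) :
    rowPass R (v ++ w) =
      ((rowPass R v).1 ++ (rowPass (rowPass R v).2 w).1, (rowPass (rowPass R v).2 w).2) := by
  induction v generalizing R with
  | nil => rfl
  | cons p v ih => simp [rowPass, ih]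

theorem isRow_nil : IsRow ([] : List (α × ℕ)) := List.Pairwise.nil

theorem IsRow.rowInsert {R : List (α × ℕ)} (hR : IsRow R) (p : α × ℕ) :
    IsRow (rowInsert p R).2 := by
  rcases forall_le_or_exists_bumped p R with hRp | ⟨U, x, V, rfl, hU, hx⟩
  · rw [rowInsert_of_le hRp]
    exact List.pairwise_append.2 ⟨hR, List.pairwise_singleton _ _, by simpa using hRp⟩
  · rw [rowInsert_of_lt hU hx]
    simp only [IsRow, List.pairwise_append, List.pairwise_cons, List.forall_mem_cons] at hR ⊢
    obtain ⟨hUU, ⟨hxV, hVV⟩, hUV⟩ := hR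
    exact ⟨hUU, ⟨fun v hv => hx.le.trans (hxV v hv), hVV⟩, fun u hu => ⟨hU u hu, (hUV u hu).2⟩⟩

theorem IsRow.concat {R : List (α × ℕ)} {p : α × ℕ} (hR : IsRow R) (hp : ∀ x ∈ R, x.2 ≤ p.2) :
    IsRow (R ++ [p]) := by
  simpa only [rowInsert_of_le hp] using hR.rowInsert p

theorem IsRow.rowPass {R : List (α × ℕ)} (hR : IsRow R) (w : List (α × ℕ)) :
    IsRow (rowPass R w).2 := by
  induction w generalizing R with
  | nil => exact hR
  | cons p _ ih => exact ih (hR.rowInsert p)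

theorem IsRow.of_lowerWord_eq_some {i e : ℕ} {w w' : List (α × ℕ)} (hw : IsRow w)
    (h : lowerWord i e w = some w') : IsRow w' := by
  have : IsTrans (α × ℕ) fun p q => p.2 ≤ q.2 := ⟨fun _ _ _ => le_trans⟩
  refine (isChain_of_lowerWord_eq_some ?_ ?_ hw.isChain h).pairwise
  · exact fun p a hp => hp.trans (Nat.le_succ i)
  · exact fun a q hq hqi => Nat.lt_of_le_of_ne hq (Ne.symm hqi)

end RowInsertion

section RowInsertionCrystal

variable {α : Type*} {i : ℕ}

theorem openBrackets_rowInsert (e : ℕ) {R : List (α × ℕ)} (hR : IsRow R) (p : α × ℕ) :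
    openBrackets i e ((rowInsert p R).1 ++ (rowInsert p R).2) = openBrackets i e (R ++ [p]) := by
  rcases forall_le_or_exists_bumped p R with hRp | ⟨U, x, V, rfl, hU, hx⟩
  · simp [rowInsert_of_le hRp]
  simp only [IsRow, List.pairwise_append, List.pairwise_cons] at hR
  obtain ⟨-, ⟨hxV, -⟩, -⟩ := hR
  simp only [rowInsert_of_lt hU hx, openBrackets_append, openBrackets_cons, openBrackets_nil]
  obtain hpi | hix | ⟨hpi, hxi⟩ : p.2 < i ∨ i + 1 < x.2 ∨ (p.2 = i ∧ x.2 = i + 1) := by omega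
  · have hU' (e) : openBrackets i e U = e :=
      openBrackets_of_neutral e fun u hu => by have := hU u hu; omega
    have hp (e) : bracketStep i e p.2 = e := by grind [bracketStep]
    simp only [hU', hp]
  · have hV' (e) : openBrackets i e V = e :=
      openBrackets_of_neutral e fun v hv => by have := hxV v hv; omega
    have hx' (e) : bracketStep i e x.2 = e := by grind [bracketStep]
    simp only [hV', hx']
  · have hU' (e) := openBrackets_of_forall_ne_succ (i := i) e (w := U)
      fun u hu => by have := hU u hu; omega
    have hV' (e) := openBrackets_of_forall_ne (i := i) e (w := V)
      fun v hv => by have := hxV v hv; omega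
    simp only [hU', hV', hpi, hxi, bracketStep]
    grind

theorem forall_le_of_lowerWord_eq_some {e : ℕ} {R R' : List (α × ℕ)} {p : α × ℕ} (hR : IsRow R)
    (hp : ∀ x ∈ R, x.2 ≤ p.2) (hlow : lowerWord i e R = some R')
    (hne : ¬(p.2 = i ∧ openBrackets i e R = 0)) : ∀ x ∈ R', x.2 ≤ p.2 := by
  have happ : lowerWord i e (R ++ [p]) = some (R' ++ [p]) := by
    simp [lowerWord_append, lowerWord_singleton, hne, hlow]
  simpa using (List.pairwise_append.1 ((hR.concat hp).of_lowerWord_eq_some happ)).2.2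

theorem lowerTensor_rowInsert_of_le (e : ℕ) {R : List (α × ℕ)} {p : α × ℕ} (hR : IsRow R)
    (hp : ∀ x ∈ R, x.2 ≤ p.2) :
    lowerTensor i e (rowInsert p R) =
      (lowerTensor i e (R, [p])).map (Function.uncurry rowPass) := by
  simp only [rowInsert_of_le hp, lowerTensor, openBrackets_nil, lowerWord_append,
    lowerWord, Option.map_none, Option.or_none]
  split_ifs with h
  · have hp' : ∀ x ∈ R, x.2 ≤ (p.1, i + 1).2 := fun x hx => (hp x hx).trans (by simp [h.1])
    simp [rowPass_singleton, rowInsert_of_le hp']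
  · rcases hlow : lowerWord i e R with _ | R'
    · rfl
    · have hp' := forall_le_of_lowerWord_eq_some hR hp hlow h
      simp [rowPass_singleton, rowInsert_of_le hp']

theorem lowerTensor_rowInsert_of_lt_index (e : ℕ) {U V : List (α × ℕ)} {p x : α × ℕ}
    (hU : ∀ u ∈ U, u.2 ≤ p.2) (hx : p.2 < x.2) (hpi : p.2 < i) :
    lowerTensor i e (rowInsert p (U ++ x :: V)) =
      (lowerTensor i e (U ++ x :: V, [p])).map (Function.uncurry rowPass) := by
  have hU' (e) : openBrackets i e U = e :=
    openBrackets_of_neutral e fun u hu => by have := hU u hu; omega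
  have hUnone (e) : lowerWord i e U = none :=
    lowerWord_eq_none_of_forall_ne e fun u hu => by have := hU u hu; omega
  have hp (e) : bracketStep i e p.2 = e := by grind [bracketStep]
  simp only [rowInsert_of_lt hU hx, lowerTensor, lowerWord_append, lowerWord, openBrackets_cons,
    openBrackets_nil, hU', hUnone, hp, hpi.ne, Option.map_map, Option.map_or, Option.map_none,
    Option.none_or, Option.or_none, Function.comp_def, Function.uncurry_apply_pair, false_and,
    if_false, rowPass_singleton]
  congr 1
  split_ifs with h
  · have hx' : p.2 < (x.1, i + 1).2 := by simp only; omega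
    simp [rowInsert_of_lt hU hx']
  · rfl

theorem lowerTensor_rowInsert_of_index_lt (e : ℕ) {U V : List (α × ℕ)} {p x : α × ℕ}
    (hR : IsRow (U ++ x :: V)) (hU : ∀ u ∈ U, u.2 ≤ p.2) (hx : p.2 < x.2) (hxi : i + 1 < x.2) :
    lowerTensor i e (rowInsert p (U ++ x :: V)) =
      (lowerTensor i e (U ++ x :: V, [p])).map (Function.uncurry rowPass) := by
  obtain ⟨hUrow, ⟨hxV, -⟩, -⟩ : IsRow U ∧ ((∀ v ∈ V, x.2 ≤ v.2) ∧ IsRow V) ∧ _ := by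
    simpa only [IsRow, List.pairwise_append, List.pairwise_cons] using hR
  have hV' (e) : openBrackets i e V = e :=
    openBrackets_of_neutral e fun v hv => by have := hxV v hv; omega
  have hVnone (e) : lowerWord i e V = none :=
    lowerWord_eq_none_of_forall_ne e fun v hv => by have := hxV v hv; omega
  have hx' (e) : bracketStep i e x.2 = e := by grind [bracketStep]
  have hxne : x.2 ≠ i := by omega
  simp only [rowInsert_of_lt hU hx, lowerTensor, lowerWord_append, lowerWord, openBrackets_append,
    openBrackets_cons, openBrackets_nil, hV', hVnone, hx', hxne, Option.map_none, Option.none_or,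
    Option.or_none, false_and, if_false]
  split_ifs with h
  · have hU' : ∀ u ∈ U, u.2 ≤ (p.1, i + 1).2 := fun u hu => (hU u hu).trans (by simp [h.1])
    simp [rowPass_singleton, rowInsert_of_lt (p := (p.1, i + 1)) hU' hxi]
  · rcases hlow : lowerWord i e U with _ | U'
    · rfl
    · have hU' := forall_le_of_lowerWord_eq_some hUrow hU hlow h
      simp [rowPass_singleton, rowInsert_of_lt hU' hx]

theorem exists_concat_of_lowerWord_eq_some {e : ℕ} {U U' : List (α × ℕ)} (hU : IsRow U)
    (hUi : ∀ u ∈ U, u.2 ≤ i) (hlow : lowerWord i e U = some U') :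
    ∃ B d, U = B ++ [(d, i)] ∧ U' = B ++ [(d, i + 1)] := by
  obtain ⟨B, d, v, rfl, rfl, hv⟩ := exists_of_lowerWord_eq_some hlow
  rcases v with _ | ⟨q, v⟩
  · exact ⟨B, d, rfl, rfl⟩
  · simp only [IsRow, List.pairwise_append, List.pairwise_cons, List.forall_mem_cons] at hU
    exact absurd ((hUi q (by simp)).antisymm hU.2.1.1.1) (hv q rfl)

theorem lowerTensor_rowInsert_of_eq_index (e : ℕ) {U V : List (α × ℕ)} {p x : α × ℕ}
    (hR : IsRow (U ++ x :: V)) (hU : ∀ u ∈ U, u.2 ≤ p.2) (hpi : p.2 = i) (hxi : x.2 = i + 1) :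
    lowerTensor i e (rowInsert p (U ++ x :: V)) =
      (lowerTensor i e (U ++ x :: V, [p])).map (Function.uncurry rowPass) := by
  obtain ⟨a, b⟩ := p
  obtain ⟨c, y⟩ := x
  obtain rfl : b = i := hpi
  obtain rfl : y = b + 1 := hxi
  obtain ⟨hUrow, ⟨hxV, -⟩, -⟩ : IsRow U ∧ ((∀ v ∈ V, b + 1 ≤ v.2) ∧ IsRow V) ∧ _ := by
    simpa only [IsRow, List.pairwise_append, List.pairwise_cons] using hR
  have hVb : ∀ v ∈ V, v.2 ≠ b := fun v hv => (Nat.lt_of_succ_le (hxV v hv)).ne'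
  have hUb : ∀ u ∈ U, u.2 ≠ b + 1 := fun u hu => (Nat.lt_succ_of_le (hU u hu)).ne
  have hVnone (e) : lowerWord b e V = none := lowerWord_eq_none_of_forall_ne e hVb
  have hopen (e) : openBrackets b (e + 1) V ≠ 0 := by
    rw [openBrackets_of_forall_ne _ hVb]; omega
  have hrow := rowInsert_of_lt (p := (a, b)) (x := (c, b + 1)) hU b.lt_succ_self V
  simp only [hrow, lowerTensor, lowerWord_append, lowerWord,
    openBrackets_append, openBrackets_cons, openBrackets_nil,
    openBrackets_of_forall_ne_succ _ hUb, hVnone, hopen, bracketStep, reduceIte,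
    Nat.succ_ne_self, Option.map_none, Option.none_or,
    Option.or_none, false_and, and_false]
  rcases hlow : lowerWord b e U with _ | U'
  · have hcount := (lowerWord_eq_none_iff_of_forall_ne_succ e hUb).1 hlow
    have hlow' := (lowerWord_eq_none_iff_of_forall_ne_succ (e + 1) hUb).2 (by omega)
    have hne : e + 1 - (U.map Prod.snd).count b ≠ 0 := by omega
    simp [hlow', hne]
  · have hcount : e + 1 - (U.map Prod.snd).count b = 0 := by
      by_contra hne
      have := (lowerWord_eq_none_iff_of_forall_ne_succ e hUb).2 (by omega)
      simp [this] at hlow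
    obtain ⟨B, d, rfl, rfl⟩ := exists_concat_of_lowerWord_eq_some hUrow hU hlow
    have hB : ∀ u ∈ B, u.2 ≤ (a, b).2 := fun u hu => hU u (by simp [hu])
    simp only [hcount]
    simp [rowPass_singleton, rowInsert_of_lt hB]

theorem lowerTensor_rowInsert (e : ℕ) {R : List (α × ℕ)} (hR : IsRow R) (p : α × ℕ) :
    lowerTensor i e (rowInsert p R) =
      (lowerTensor i e (R, [p])).map (Function.uncurry rowPass) := by
  rcases forall_le_or_exists_bumped p R with hp | ⟨U, x, V, rfl, hU, hx⟩
  · exact lowerTensor_rowInsert_of_le e hR hp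
  obtain hpi | hxi | ⟨hpi, hxi⟩ : p.2 < i ∨ i + 1 < x.2 ∨ (p.2 = i ∧ x.2 = i + 1) := by omega
  · exact lowerTensor_rowInsert_of_lt_index e hU hx hpi
  · exact lowerTensor_rowInsert_of_index_lt e hR hU hx hxi
  · exact lowerTensor_rowInsert_of_eq_index e hR hU hpi hxi

theorem openBrackets_rowPass (e : ℕ) {R : List (α × ℕ)} (hR : IsRow R) (w : List (α × ℕ)) :
    openBrackets i e ((rowPass R w).1 ++ (rowPass R w).2) = openBrackets i e (R ++ w) := by
  induction w generalizing R e with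
  | nil => simp [rowPass]
  | cons p w ih =>
    have hp := openBrackets_rowInsert (i := i) e hR p
    have hw := ih (openBrackets i e (rowInsert p R).1) (hR.rowInsert p)
    simp only [openBrackets_append, openBrackets_cons, openBrackets_nil] at hp hw
    simp only [rowPass, openBrackets_append, openBrackets_cons, hw, hp]

theorem lowerTensor_rowPass (e : ℕ) {R : List (α × ℕ)} (hR : IsRow R) (w : List (α × ℕ)) :
    lowerTensor i e (rowPass R w) =
      (lowerTensor i e (R, w)).map (Function.uncurry rowPass) := by
  induction w generalizing R e with
  | nil => simp [rowPass, lowerTensor, lowerWord, Function.comp_def]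
  | cons p w ih =>
    have hopen := openBrackets_rowInsert (i := i) e hR p
    have hlower := lowerTensor_rowInsert (i := i) e hR p
    have ih := ih (openBrackets i e (rowInsert p R).1) (hR.rowInsert p)
    rcases hrow : rowInsert p R with ⟨o, R₁⟩
    rw [hrow] at hopen hlower ih
    let f (s : List (α × ℕ) × List (α × ℕ)) := (o ++ s.1, s.2)
    let g (s : List (α × ℕ) × List (α × ℕ)) := (s.1 ++ (rowPass s.2 w).1, (rowPass s.2 w).2)
    calc lowerTensor i e (rowPass R (p :: w))
        = ((lowerTensor i (openBrackets i e o) (rowPass R₁ w)).map f).or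
            ((lowerWord i e o).map fun o' => g (o', R₁)) := by
          simp [rowPass, hrow, lowerTensor, lowerWord_append, f, g, Option.map_or,
            Option.or_assoc, Function.comp_def]
      _ = ((lowerWord i (openBrackets i e (o ++ R₁)) w).map fun w' => f (rowPass R₁ w')).or
            ((lowerTensor i e (o, R₁)).map g) := by
          rw [ih]
          simp [lowerTensor, f, g, Option.map_or, Option.or_assoc, Function.comp_def]
      _ = (lowerTensor i e (R, p :: w)).map (Function.uncurry rowPass) := by
          rw [hopen, hlower]
          simp [lowerTensor, lowerWord_cons _ _ _ w, f, g, rowPass, rowPass_append, hrow,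
            Option.map_or, Option.or_assoc, Function.comp_def]

end RowInsertionCrystal

section PairedTableau

variable {α : Type*}

/-- The insertion tableau of the second coordinates of a biword with the recording entry of each box
attached, that is, the two RSK tableaux superposed. It is built row by row rather than letter by
letter. -/
def pairedTableau : List (α × ℕ) → List (List (α × ℕ))
  | [] => []
  | p :: w => (rowPass [p] w).2 :: pairedTableau (rowPass [p] w).1
termination_by w => w.length
decreasing_by exact Nat.lt_succ_of_le (length_rowPass_fst_le [p] w)

/-- The entries of a paired tableau in row reading order. -/
def readingWord (T : List (List (α × ℕ))) : List (α × ℕ) := T.reverse.flatten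

/-- The tableau lowering operator `f_i` on the second coordinates of a paired tableau. -/
def lowerRows (i : ℕ) : List (List (α × ℕ)) → Option (List (List (α × ℕ)))
  | [] => none
  | R :: T => ((lowerWord i (openBrackets i 0 (readingWord T)) R).map (· :: T)).or
      ((lowerRows i T).map (R :: ·))

theorem pairedTableau_nil : pairedTableau ([] : List (α × ℕ)) = [] := by
  simp [pairedTableau]

theorem pairedTableau_of_ne_nil {w : List (α × ℕ)} (hw : w ≠ []) :
    pairedTableau w = (rowPass [] w).2 :: pairedTableau (rowPass [] w).1 := by
  obtain ⟨p, w, rfl⟩ := List.exists_cons_of_ne_nil hw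
  simp [pairedTableau, rowPass, rowInsert]

theorem length_rowPass_nil_fst_lt {w : List (α × ℕ)} (hw : w ≠ []) :
    (rowPass [] w).1.length < w.length := by
  obtain ⟨p, w, rfl⟩ := List.exists_cons_of_ne_nil hw
  simpa [rowPass, rowInsert, Nat.lt_succ_iff] using length_rowPass_fst_le [p] w

@[elab_as_elim]
theorem rowPass_induction {motive : List (α × ℕ) → Prop} (w : List (α × ℕ))
    (nil : motive [])
    (step : ∀ w, w ≠ [] → motive (rowPass [] w).1 → motive w) : motive w := by
  induction h : w.length using Nat.strong_induction_on generalizing w with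
  | _ k ih =>
    subst h
    by_cases hw : w = []
    · exact hw ▸ nil
    · exact step w hw (ih _ (length_rowPass_nil_fst_lt hw) _ rfl)

theorem readingWord_cons (R : List (α × ℕ)) (T : List (List (α × ℕ))) :
    readingWord (R :: T) = readingWord T ++ R := by
  simp [readingWord]

theorem lowerWord_readingWord (i : ℕ) (T : List (List (α × ℕ))) :
    lowerWord i 0 (readingWord T) = (lowerRows i T).map readingWord := by
  induction T with
  | nil => rfl
  | cons R T ih =>
    simp [readingWord_cons, lowerWord_append, ih, lowerRows, Option.map_or, Function.comp_def]

theorem map_map_fst_of_lowerRows_eq_some {i : ℕ} {T T' : List (List (α × ℕ))}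
    (h : lowerRows i T = some T') : T'.map (List.map Prod.fst) = T.map (List.map Prod.fst) := by
  induction T generalizing T' with
  | nil => simp [lowerRows] at h
  | cons R T ih =>
    rcases Option.or_eq_some_iff.1 h with h | ⟨-, h⟩
    · obtain ⟨R', hR', rfl⟩ := Option.map_eq_some_iff.1 h
      simp [map_fst_of_lowerWord_eq_some hR']
    · obtain ⟨T₁, hT₁, rfl⟩ := Option.map_eq_some_iff.1 h
      simp [ih hT₁]

theorem openBrackets_readingWord_pairedTableau (i : ℕ) (w : List (α × ℕ)) :
    openBrackets i 0 (readingWord (pairedTableau w)) = openBrackets i 0 w := by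
  induction w using rowPass_induction with
  | nil => simp [pairedTableau_nil, readingWord]
  | step w hw ih =>
    rw [pairedTableau_of_ne_nil hw, readingWord_cons, openBrackets_append, ih,
      ← openBrackets_append, openBrackets_rowPass 0 isRow_nil, List.nil_append]

theorem lowerRows_pairedTableau (i : ℕ) (w : List (α × ℕ)) :
    lowerRows i (pairedTableau w) = (lowerWord i 0 w).map pairedTableau := by
  induction w using rowPass_induction with
  | nil => simp [pairedTableau_nil, lowerRows, lowerWord]
  | step w hw ih =>
    have hpass := congrArg (Option.map fun s : List (α × ℕ) × List (α × ℕ) =>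
      s.2 :: pairedTableau s.1) (lowerTensor_rowPass (i := i) 0 isRow_nil w)
    simp only [lowerTensor, lowerWord, Option.map_or, Option.map_map, Option.map_none,
      Option.or_none, Function.comp_def, openBrackets_nil, Function.uncurry_apply_pair] at hpass
    simp only [pairedTableau_of_ne_nil hw, lowerRows, openBrackets_readingWord_pairedTableau, ih,
      Option.map_map, Function.comp_def, hpass]
    refine Option.map_congr fun w' hw' => (pairedTableau_of_ne_nil ?_).symm
    obtain ⟨u, a, v, -, rfl, -⟩ := exists_of_lowerWord_eq_some hw'
    simp

end PairedTableau

section Rsk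

theorem insRow_cons_of_le {v : ℕ} {R : List ℕ} (hR : ∀ x ∈ R, x ≤ v) (P : List (List ℕ)) :
    insRow v (R :: P) = (R ++ [v]) :: P := by
  have hfind : R.findIdx? (fun x => decide (v < x)) = none := by simpa using hR
  simp [insRow, hfind]

theorem insRow_cons_of_lt {v y : ℕ} {U : List ℕ} (hU : ∀ x ∈ U, x ≤ v) (hy : v < y) (V : List ℕ)
    (P : List (List ℕ)) : insRow v ((U ++ y :: V) :: P) = (U ++ v :: V) :: insRow y P := by
  have hfindU : U.findIdx? (fun x => decide (v < x)) = none := by simpa using hU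
  have hfind : (U ++ y :: V).findIdx? (fun x => decide (v < x)) = some U.length := by
    simp [List.findIdx?_append, hfindU, List.findIdx?_cons, hy]
  simp [insRow, hfind]

theorem growIdx_cons_of_length_ne {R R' : List ℕ} (h : R.length ≠ R'.length)
    (P P' : List (List ℕ)) : growIdx (R :: P) (R' :: P') = 0 := by
  simp [growIdx, List.range_succ_eq_map, List.findIdx_cons, h]

theorem growIdx_cons_of_length_eq {R R' : List ℕ} (h : R.length = R'.length)
    (P P' : List (List ℕ)) : growIdx (R :: P) (R' :: P') = growIdx P P' + 1 := by
  simp [growIdx, List.range_succ_eq_map, List.findIdx_cons, List.findIdx_map, h,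
    Function.comp_def]

theorem addBox_cons_succ (S : List ℕ) (Q : List (List ℕ)) (k a : ℕ) :
    addBox (S :: Q) (k + 1) a = S :: addBox Q k a := by
  by_cases h : k < Q.length <;> simp [addBox, h]

/-- One step of the RSK correspondence: insert the bottom entry of `p` and record its top entry. -/
def rskStep (PQ : List (List ℕ) × List (List ℕ)) (p : ℕ × ℕ) :
    List (List ℕ) × List (List ℕ) :=
  (insRow p.2 PQ.1, addBox PQ.2 (growIdx PQ.1 (insRow p.2 PQ.1)) p.1)

/-- Put a paired row on top of a pair of insertion and recording tableaux. -/
def consRow (R : List (ℕ × ℕ)) (PQ : List (List ℕ) × List (List ℕ)) :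
    List (List ℕ) × List (List ℕ) :=
  (R.map Prod.snd :: PQ.1, R.map Prod.fst :: PQ.2)

theorem rsk_eq_foldl (w : List (ℕ × ℕ)) : rsk w = w.foldl rskStep ([], []) := rfl

theorem rskStep_consRow (R : List (ℕ × ℕ)) (PQ : List (List ℕ) × List (List ℕ)) (p : ℕ × ℕ) :
    rskStep (consRow R PQ) p = consRow (rowInsert p R).2 ((rowInsert p R).1.foldl rskStep PQ) := by
  rcases forall_le_or_exists_bumped p R with hR | ⟨U, x, V, rfl, hU, hx⟩
  · have hins := insRow_cons_of_le (v := p.2) (R := R.map Prod.snd) (List.forall_mem_map.2 hR) PQ.1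
    simp [rskStep, consRow, hins, growIdx_cons_of_length_ne, rowInsert_of_le hR, addBox]
  · have hins := insRow_cons_of_lt (U := U.map Prod.snd) (List.forall_mem_map.2 hU) hx
      (V.map Prod.snd) PQ.1
    simp [rskStep, consRow, hins, growIdx_cons_of_length_eq, addBox_cons_succ,
      rowInsert_of_lt hU hx]

theorem foldl_rskStep_consRow (R w : List (ℕ × ℕ)) (PQ : List (List ℕ) × List (List ℕ)) :
    w.foldl rskStep (consRow R PQ) =
      consRow (rowPass R w).2 ((rowPass R w).1.foldl rskStep PQ) := by
  induction w generalizing R PQ with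
  | nil => rfl
  | cons p w ih => simp [rskStep_consRow, ih, rowPass]

theorem rsk_eq_pairedTableau (w : List (ℕ × ℕ)) :
    rsk w = ((pairedTableau w).map (List.map Prod.snd),
      (pairedTableau w).map (List.map Prod.fst)) := by
  induction w using rowPass_induction with
  | nil => simp [rsk, pairedTableau_nil]
  | step w hw ih =>
    obtain ⟨p, w, rfl⟩ := List.exists_cons_of_ne_nil hw
    have hp : rskStep ([], []) p = consRow [p] ([], []) := by
      simp [rskStep, consRow, insRow, addBox, growIdx]
    have hpass : rowPass [] (p :: w) = rowPass [p] w := by simp [rowPass, rowInsert]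
    rw [hpass, rsk_eq_foldl] at ih
    rw [pairedTableau_of_ne_nil hw, hpass, rsk_eq_foldl, List.foldl_cons, hp,
      foldl_rskStep_consRow, ih]
    rfl

end Rsk

section UnmatchedLetters

variable {α : Type*}

theorem exists_eq_append_cons_of_lt_length {β : Type*} {w : List β} {k : ℕ} (hk : k < w.length) :
    ∃ u q v, w = u ++ q :: v ∧ k = u.length :=
  ⟨w.take k, w[k], w.drop (k + 1), by simp, by simp [hk.le]⟩

theorem modify_append_cons_length {β : Type*} (f : β → β) (u : List β) (q : β) (v : List β) :
    (u ++ q :: v).modify u.length f = u ++ f q :: v := by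
  simp [List.modify_eq_take_cons_drop]

theorem bracketStep_le_iff (i e x k : ℕ) :
    bracketStep i e x ≤ k ↔
      [x].count (i + 1) ≤ [x].count i + k ∧ e + [x].count (i + 1) ≤ [x].count i + k := by
  grind [bracketStep]

theorem openBrackets_le_iff {i k : ℕ} {w : List (α × ℕ)} :
    openBrackets i 0 w ≤ k ↔
      ∀ s, s <:+ w → (s.map Prod.snd).count (i + 1) ≤ (s.map Prod.snd).count i + k := by
  induction w using List.reverseRecOn generalizing k with
  | nil => simp
  | append_singleton w p ih =>
    have hsuffix : (∀ s, s <:+ w ++ [p] →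
        (s.map Prod.snd).count (i + 1) ≤ (s.map Prod.snd).count i + k) ↔
        ∀ s, s <:+ w → (s.map Prod.snd).count (i + 1) + [p.2].count (i + 1) ≤
          (s.map Prod.snd).count i + [p.2].count i + k := by
      simp only [List.suffix_concat_iff]
      refine ⟨fun h s hs => ?_, fun h s hs => ?_⟩
      · simpa using h (s ++ [p]) (.inr ⟨s, rfl, hs⟩)
      · obtain rfl | ⟨t, rfl, ht⟩ := hs
        · simp
        · simpa using h t ht
    rw [hsuffix, openBrackets_append, openBrackets_cons, openBrackets_nil, bracketStep_le_iff]
    constructor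
    · rintro ⟨hp, hle⟩ s hs
      have := ih.1 (Nat.le_sub_of_add_le hle) s hs
      omega
    · intro h
      have hp := h [] w.nil_suffix
      have := ih (k := [p.2].count i + k - [p.2].count (i + 1)).2 fun s hs => by
        have := h s hs
        omega
      simp only [List.map_nil, List.count_nil] at hp
      omega

theorem unmatchedClose_iff {i : ℕ} (u : List (α × ℕ)) (q : α × ℕ) (v : List (α × ℕ)) :
    unmatchedClose ((u ++ q :: v).map Prod.snd) i u.length = true ↔
      q.2 = i ∧ openBrackets i 0 u = 0 := by
  have hwindow (k : ℕ) (hk : k ≤ u.length) :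
      (((u ++ q :: v).map Prod.snd).drop k).take (u.length + 1 - k) =
        (u.drop k).map Prod.snd ++ [q.2] := by
    rw [← List.map_drop, ← List.map_take, List.drop_append_of_le_length hk,
      Nat.sub_add_comm hk, ← List.length_drop, List.take_length_add_append]
    simp
  have hletter : ((u ++ q :: v).map Prod.snd).getD u.length 0 = q.2 := by simp
  simp only [unmatchedClose, hletter, Bool.and_eq_true, decide_eq_true_eq, List.all_eq_true,
    List.mem_range, Nat.lt_succ_iff]
  rw [← Nat.le_zero, openBrackets_le_iff]
  constructor
  · rintro ⟨⟨-, rfl⟩, h⟩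
    refine ⟨rfl, fun s hs => ?_⟩
    have := h (u.length - s.length) (Nat.sub_le _ _)
    rw [hwindow _ (Nat.sub_le _ _), ← List.suffix_iff_eq_drop.1 hs] at this
    simpa [Nat.lt_succ_iff] using this
  · rintro ⟨rfl, h⟩
    refine ⟨⟨by simp, rfl⟩, fun k hk => ?_⟩
    rw [hwindow k hk]
    simpa [Nat.lt_succ_iff] using h _ (List.drop_suffix k u)

theorem rightUnmatched_concat (i : ℕ) (w : List (α × ℕ)) (p : α × ℕ) :
    rightUnmatched ((w ++ [p]).map Prod.snd) i =
      if p.2 = i ∧ openBrackets i 0 w = 0 then some w.length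
      else rightUnmatched (w.map Prod.snd) i := by
  have hlt (k) (hk : k ∈ (List.range w.length).reverse) :
      unmatchedClose ((w ++ [p]).map Prod.snd) i k = unmatchedClose (w.map Prod.snd) i k := by
    obtain ⟨u, q, v, rfl, rfl⟩ :=
      exists_eq_append_cons_of_lt_length (by simpa using hk : k < w.length)
    rw [Bool.eq_iff_iff, unmatchedClose_iff, List.append_assoc, List.cons_append,
      unmatchedClose_iff]
  simp only [rightUnmatched, List.length_map, List.length_append, List.length_singleton,
    List.range_succ, List.reverse_append, List.reverse_singleton, List.singleton_append,
    List.find?_cons, List.find?_congr hlt, ← unmatchedClose_iff w p []]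
  split <;> simp_all

theorem lt_length_of_rightUnmatched_eq_some {w : List ℕ} {i p : ℕ}
    (h : rightUnmatched w i = some p) : p < w.length := by
  simpa using List.mem_of_find?_eq_some h

theorem lowerWord_eq_map_rightUnmatched (i : ℕ) (w : List (α × ℕ)) :
    lowerWord i 0 w = (rightUnmatched (w.map Prod.snd) i).map fun p =>
      w.modify p fun q => (q.1, i + 1) := by
  induction w using List.reverseRecOn with
  | nil => rfl
  | append_singleton w p ih =>
    rw [rightUnmatched_concat, lowerWord_append, lowerWord_singleton, ih]
    split_ifs
    · simp [modify_append_cons_length]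
    · rcases h : rightUnmatched (w.map Prod.snd) i with _ | k
      · rfl
      · obtain ⟨u, q, v, rfl, rfl⟩ := exists_eq_append_cons_of_lt_length
          (by simpa using lt_length_of_rightUnmatched_eq_some h : k < w.length)
        simp [modify_append_cons_length]

end UnmatchedLetters

section TableauLowering

variable {α : Type*}

theorem rowWord_cons (R : List ℕ) (P : List (List ℕ)) : rowWord (R :: P) = rowWord P ++ R := by
  simp [rowWord]

theorem rowWordBoxes_cons (R : List ℕ) (P : List (List ℕ)) :
    rowWordBoxes (R :: P) = (rowWordBoxes P).map (fun rc => (rc.1 + 1, rc.2)) ++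
      (List.range R.length).map fun c => (0, c) := by
  simp only [rowWordBoxes, List.length_cons, List.range_succ_eq_map, List.reverse_cons,
    List.flatMap_append, ← List.map_reverse, List.flatMap_map, List.map_flatMap]
  simp [Function.comp_def]

theorem length_rowWordBoxes (P : List (List ℕ)) :
    (rowWordBoxes P).length = (rowWord P).length := by
  induction P with
  | nil => rfl
  | cons R P ih => simp [rowWordBoxes_cons, rowWord_cons, ih]

theorem rowWord_set_box {P : List (List ℕ)} {k : ℕ} {rc : ℕ × ℕ} (x : ℕ)
    (h : (rowWordBoxes P)[k]? = some rc) :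
    rowWord (P.set rc.1 ((P.getD rc.1 []).set rc.2 x)) = (rowWord P).set k x := by
  induction P generalizing k rc with
  | nil => simp [rowWordBoxes] at h
  | cons R P ih =>
    rw [rowWordBoxes_cons, List.getElem?_append, List.length_map, length_rowWordBoxes] at h
    split_ifs at h with hk
    · obtain ⟨rc, hrc, rfl⟩ := Option.map_eq_some_iff.1 (List.getElem?_map.symm.trans h)
      simpa [rowWord_cons, List.set_append_left _ _ hk] using ih hrc
    · obtain ⟨-, rfl⟩ : k - (rowWord P).length < R.length ∧ (0, k - (rowWord P).length) = rc := by
        simpa [List.getElem?_eq_some_iff] using h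
      simp [rowWord_cons, List.set_append_right _ _ (not_lt.1 hk)]

theorem map_length_set_box (P : List (List ℕ)) (r c x : ℕ) :
    (P.set r ((P.getD r []).set c x)).map List.length = P.map List.length := by
  induction P generalizing r with
  | nil => rfl
  | cons R P ih => rcases r with _ | r <;> simp_all [List.map_set]

theorem map_rowWord_fLower (i : ℕ) (P : List (List ℕ)) :
    (fLower i P).map rowWord =
      (rightUnmatched (rowWord P) i).map fun k => (rowWord P).set k (i + 1) := by
  unfold fLower
  rcases h : rightUnmatched (rowWord P) i with _ | k
  · rfl
  · have hk : k < (rowWordBoxes P).length :=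
      (length_rowWordBoxes P).symm ▸ lt_length_of_rightUnmatched_eq_some h
    refine congrArg some (rowWord_set_box _ ?_)
    simp [hk]

theorem map_length_of_fLower_eq_some {i : ℕ} {P P' : List (List ℕ)} (h : fLower i P = some P') :
    P'.map List.length = P.map List.length := by
  unfold fLower at h
  split at h
  · simp at h
  · obtain rfl := Option.some.inj h
    exact map_length_set_box ..

theorem eq_of_rowWord_eq {P P' : List (List ℕ)} (hword : rowWord P = rowWord P')
    (hshape : P.map List.length = P'.map List.length) : P = P' := by
  rw [← List.reverse_inj, List.eq_iff_flatten_eq]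
  simpa [rowWord, hshape, List.flatMap_id] using hword

theorem map_snd_readingWord (T : List (List (α × ℕ))) :
    (readingWord T).map Prod.snd = rowWord (T.map (List.map Prod.snd)) := by
  simp [readingWord, rowWord, List.map_flatten, List.flatMap_id]

theorem map_snd_modify (w : List (α × ℕ)) (k x : ℕ) :
    (w.modify k fun q => (q.1, x)).map Prod.snd = (w.map Prod.snd).set k x := by
  ext1 j
  by_cases hj : k = j <;> simp [List.getElem?_set', Function.comp_def, Function.const_def, hj]

theorem fLower_map_map_snd (i : ℕ) (T : List (List (α × ℕ))) :
    fLower i (T.map (List.map Prod.snd)) =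
      (lowerRows i T).map (List.map (List.map Prod.snd)) := by
  have hword : (fLower i (T.map (List.map Prod.snd))).map rowWord =
      ((lowerRows i T).map (List.map (List.map Prod.snd))).map rowWord := by
    have h := congrArg (Option.map (List.map Prod.snd)) (lowerWord_readingWord i T)
    rw [lowerWord_eq_map_rightUnmatched, map_snd_readingWord] at h
    simpa [map_rowWord_fLower, map_snd_readingWord, Function.comp_def, map_snd_modify] using h
  rcases hf : fLower i (T.map (List.map Prod.snd)) with _ | P' <;>
    rcases hT : lowerRows i T with _ | T' <;> simp only [hf, hT] at hword ⊢
  · rfl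
  · simp at hword
  · simp at hword
  · refine congrArg some (eq_of_rowWord_eq (by simpa using hword) ?_)
    rw [map_length_of_fLower_eq_some hf]
    have := congrArg (List.map List.length) (map_map_fst_of_lowerRows_eq_some hT)
    simpa [Function.comp_def] using this.symm

end TableauLowering

section RskCrystal

theorem fLower_rsk_fst (i : ℕ) (w : List (ℕ × ℕ)) :
    fLower i (rsk w).1 = (lowerWord i 0 w).map fun w' => (rsk w').1 := by
  simp [rsk_eq_pairedTableau, fLower_map_map_snd, lowerRows_pairedTableau, Function.comp_def]

theorem rsk_snd_of_lowerWord_eq_some {i : ℕ} {w w' : List (ℕ × ℕ)}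
    (h : lowerWord i 0 w = some w') : (rsk w').2 = (rsk w).2 := by
  have hrows : lowerRows i (pairedTableau w) = some (pairedTableau w') := by
    rw [lowerRows_pairedTableau, h, Option.map_some]
  simpa only [rsk_eq_pairedTableau] using map_map_fst_of_lowerRows_eq_some hrows

end RskCrystal

section LexOrder

theorem lexLe_trans {p q r : ℕ × ℕ} (hpq : lexLe p q) (hqr : lexLe q r) : lexLe p r := by
  unfold lexLe at *
  omega

theorem lexLe_total (p q : ℕ × ℕ) : lexLe p q ∨ lexLe q p := by
  unfold lexLe
  omega

theorem lexLe_antisymm {p q : ℕ × ℕ} (hpq : lexLe p q) (hqp : lexLe q p) : p = q := by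
  unfold lexLe at *
  ext <;> omega

instance : Std.Total lexLe := ⟨lexLe_total⟩

instance : IsTrans (ℕ × ℕ) lexLe := ⟨fun _ _ _ => lexLe_trans⟩

instance : Std.Antisymm lexLe := ⟨fun _ _ => lexLe_antisymm⟩

theorem sortLex_perm (w : List (ℕ × ℕ)) : (sortLex w).Perm w := List.perm_insertionSort _ _

theorem sortLex_pairwise (w : List (ℕ × ℕ)) : (sortLex w).Pairwise lexLe :=
  List.pairwise_insertionSort _ _

theorem sortLex_eq {v w : List (ℕ × ℕ)} (h : v.Perm w) (hw : w.Pairwise lexLe) :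
    sortLex v = w :=
  ((sortLex_perm v).trans h).eq_of_pairwise' (sortLex_pairwise v) hw

/-- The biword of the inverse correspondence: exchange the two rows and sort. -/
def inverseBiword (w : List (ℕ × ℕ)) : List (ℕ × ℕ) := sortLex (w.map Prod.swap)

theorem inverseBiword_perm (w : List (ℕ × ℕ)) : (inverseBiword w).Perm (w.map Prod.swap) :=
  sortLex_perm _

theorem inverseBiword_pairwise (w : List (ℕ × ℕ)) : (inverseBiword w).Pairwise lexLe :=
  sortLex_pairwise _

theorem mem_inverseBiword {p : ℕ × ℕ} {w : List (ℕ × ℕ)} : p ∈ inverseBiword w ↔ p.swap ∈ w := by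
  simp [(inverseBiword_perm w).mem_iff, Prod.swap_eq_iff_eq_swap]

theorem exists_inverseBiword_concat {w : List (ℕ × ℕ)} {p : ℕ × ℕ} (hp : ∀ x ∈ w, lexLe x p) :
    ∃ u v, inverseBiword w = u ++ v ∧ inverseBiword (w ++ [p]) = u ++ p.swap :: v ∧
      (∀ x ∈ u, x.1 ≤ p.2 ∧ x.2 ≤ p.1) ∧ ∀ x ∈ v, p.2 < x.1 ∧ x.2 < p.1 := by
  set W := inverseBiword w
  set u := W.filter fun x => lexLe x p.swap
  set v := W.filter fun x => !lexLe x p.swap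
  have hu : ∀ x ∈ u, lexLe x.swap p ∧ lexLe x p.swap := fun x hx => by
    rw [List.mem_filter, mem_inverseBiword] at hx
    exact ⟨hp _ hx.1, by simpa using hx.2⟩
  have hv : ∀ x ∈ v, lexLe x.swap p ∧ ¬ lexLe x p.swap := fun x hx => by
    rw [List.mem_filter, mem_inverseBiword] at hx
    exact ⟨hp _ hx.1, by simpa using hx.2⟩
  have hsorted : (u ++ p.swap :: v).Pairwise lexLe := by
    have hpv : ∀ x ∈ v, lexLe p.swap x := fun x hx => (lexLe_total _ _).resolve_right (hv x hx).2
    refine List.pairwise_append.2 ⟨(inverseBiword_pairwise w).filter _,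
      List.pairwise_cons.2 ⟨hpv, (inverseBiword_pairwise w).filter _⟩, fun x hx => ?_⟩
    exact List.forall_mem_cons.2 ⟨(hu x hx).2, fun y hy => lexLe_trans (hu x hx).2 (hpv y hy)⟩
  have hperm : (u ++ v).Perm W := List.filter_append_perm _ _
  refine ⟨u, v, ?_, ?_, fun x hx => ?_, fun x hx => ?_⟩
  · exact (hperm.eq_of_pairwise' (hsorted.sublist (by simp)) (inverseBiword_pairwise w)).symm
  · refine sortLex_eq ?_ hsorted
    have := (hperm.trans (inverseBiword_perm w)).symm
    simpa using (List.perm_append_singleton _ _).trans ((this.cons _).trans List.perm_middle.symm)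
  · have := hu x hx
    simp only [lexLe, Prod.fst_swap, Prod.snd_swap] at this
    omega
  · have := hv x hx
    simp only [lexLe, Prod.fst_swap, Prod.snd_swap] at this
    omega

end LexOrder

section Symmetry

theorem forall_mem_rowInsert_snd {α : Type*} {s : α → Prop} {t : ℕ → Prop} {p : α × ℕ}
    {R : List (α × ℕ)} (hR : ∀ x ∈ R, s x.1 ∧ t x.2) (hp : s p.1 ∧ t p.2) :
    ∀ x ∈ (rowInsert p R).2, s x.1 ∧ t x.2 := by
  rcases forall_le_or_exists_bumped p R with hRp | ⟨U, x, V, rfl, hU, hx⟩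
  · rw [rowInsert_of_le hRp, List.forall_mem_append]
    exact ⟨hR, List.forall_mem_singleton.2 hp⟩
  · rw [rowInsert_of_lt hU hx]
    rw [List.forall_mem_append, List.forall_mem_cons] at hR ⊢
    exact ⟨hR.1, ⟨hR.2.1.1, hp.2⟩, hR.2.2⟩

theorem forall_mem_rowPass_snd {α : Type*} {s : α → Prop} {t : ℕ → Prop} {R w : List (α × ℕ)}
    (hR : ∀ x ∈ R, s x.1 ∧ t x.2) (hw : ∀ x ∈ w, s x.1 ∧ t x.2) :
    ∀ x ∈ (rowPass R w).2, s x.1 ∧ t x.2 := by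
  induction w generalizing R with
  | nil => exact hR
  | cons p w ih =>
    rw [List.forall_mem_cons] at hw
    exact ih (forall_mem_rowInsert_snd hR hw.1) hw.2

-- The invariant `hR` makes a letter recorded by `c` bump only letters that are at least `y`.
theorem lexLe_of_mem_rowPass_fst {c y : ℕ} {R w : List (ℕ × ℕ)} (hw : w.Pairwise lexLe)
    (hc : ∀ q ∈ w, c ≤ q.1) (hR : ∀ x ∈ R, ∀ q ∈ w, q.1 = c → x.2 ≤ q.2 ∨ y ≤ x.2) :
    ∀ q ∈ (rowPass R w).1, lexLe (c, y) q := by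
  induction w generalizing R with
  | nil => simp [rowPass]
  | cons p w ih =>
    obtain ⟨hpw, hw⟩ := List.pairwise_cons.1 hw
    obtain ⟨hcp, hc⟩ := List.forall_mem_cons.1 hc
    have hinv : ∀ x ∈ (rowInsert p R).2, True ∧ ∀ q ∈ w, q.1 = c → x.2 ≤ q.2 ∨ y ≤ x.2 := by
      refine forall_mem_rowInsert_snd (s := fun _ => True)
        (t := fun b => ∀ q ∈ w, q.1 = c → b ≤ q.2 ∨ y ≤ b)
        (fun x hx => ⟨trivial, fun q hq => hR x hx q (.tail _ hq)⟩) ⟨trivial, fun q hq hqc => ?_⟩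
      have := hpw q hq
      unfold lexLe at this
      omega
    have hout : ∀ q ∈ (rowInsert p R).1, lexLe (c, y) q := by
      rcases forall_le_or_exists_bumped p R with hRp | ⟨U, x, V, rfl, hU, hx⟩
      · simp [rowInsert_of_le hRp]
      · have hxp := hR x (by simp) p (by simp)
        rw [rowInsert_of_lt hU hx, List.forall_mem_singleton, lexLe]
        omega
    exact List.forall_mem_append.2 ⟨hout, ih hw hc fun x hx => (hinv x hx).2⟩

theorem pairwise_rowPass_fst {R w : List (ℕ × ℕ)} (hR : IsRow R) (hw : w.Pairwise lexLe) :
    (rowPass R w).1.Pairwise lexLe := by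
  induction w generalizing R with
  | nil => exact List.Pairwise.nil
  | cons p w ih =>
    obtain ⟨hpw, hw⟩ := List.pairwise_cons.1 hw
    have htop : ∀ q ∈ w, p.1 ≤ q.1 ∧ (q.1 = p.1 → p.2 ≤ q.2) := fun q hq => by
      have := hpw q hq
      unfold lexLe at this
      omega
    refine List.pairwise_append.2 ⟨?_, ih (hR.rowInsert p) hw, ?_⟩
    · rcases forall_le_or_exists_bumped p R with hRp | ⟨U, x, V, rfl, hU, hx⟩
      · simp [rowInsert_of_le hRp]
      · simp [rowInsert_of_lt hU hx]
    · rcases forall_le_or_exists_bumped p R with hRp | ⟨U, x, V, rfl, hU, hx⟩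
      · simp [rowInsert_of_le hRp]
      · have hxV := (List.pairwise_cons.1 (List.pairwise_append.1 hR).2.1).1
        rw [rowInsert_of_lt hU hx, List.forall_mem_singleton]
        refine lexLe_of_mem_rowPass_fst hw (fun q hq => (htop q hq).1) ?_
        rw [List.forall_mem_append, List.forall_mem_cons]
        exact ⟨fun u hu q hq hqp => .inl ((hU u hu).trans ((htop q hq).2 hqp)),
          fun q hq hqp => .inl ((htop q hq).2 hqp), fun v hv _ _ _ => .inr (hxV v hv)⟩

/-- Row insertion with the roles of the two coordinates of every box exchanged: the first
coordinate of `p` is inserted. -/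
def dualInsert (p : ℕ × ℕ) (R : List (ℕ × ℕ)) : List (ℕ × ℕ) × List (ℕ × ℕ) :=
  (rowInsert p.swap (R.map Prod.swap)).map (List.map Prod.swap) (List.map Prod.swap)

theorem dualInsert_of_le {p : ℕ × ℕ} {R : List (ℕ × ℕ)} (hR : ∀ x ∈ R, x.1 ≤ p.1) :
    dualInsert p R = ([], R ++ [p]) := by
  rw [dualInsert, rowInsert_of_le (List.forall_mem_map.2 hR)]
  simp

theorem dualInsert_map_swap (p : ℕ × ℕ) (R : List (ℕ × ℕ)) :
    dualInsert p.swap (R.map Prod.swap) =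
      ((rowInsert p R).1.map Prod.swap, (rowInsert p R).2.map Prod.swap) := by
  simp [dualInsert, Prod.map]

theorem rowInsert_dualInsert {p q : ℕ × ℕ} (hfst : p.1 < q.1) (hsnd : q.2 < p.2)
    (R : List (ℕ × ℕ)) :
    (rowInsert q (dualInsert p R).2).2 = (dualInsert p (rowInsert q R).2).2 ∧
      ((dualInsert p R).1 ++ (rowInsert q (dualInsert p R).2).1).Perm
        ((rowInsert q R).1 ++ (dualInsert p (rowInsert q R).2).1) := by
  induction R with
  | nil => simp [dualInsert, rowInsert, hfst, hsnd]
  | cons x R ih =>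
    by_cases hx₁ : p.1 < x.1 <;> by_cases hx₂ : q.2 < x.2
    · simpa [dualInsert, rowInsert, hx₁, hx₂] using List.Perm.swap _ _ _
    · simpa [dualInsert, rowInsert, hx₁, hx₂] using (List.perm_append_singleton _ _).symm
    · simp [dualInsert, rowInsert, hx₁, hx₂]
    · simpa [dualInsert, rowInsert, hx₁, hx₂] using ih

theorem rowPass_dualInsert {p : ℕ × ℕ} {w : List (ℕ × ℕ)} (hw : ∀ q ∈ w, p.1 < q.1 ∧ q.2 < p.2)
    (R : List (ℕ × ℕ)) :
    (rowPass (dualInsert p R).2 w).2 = (dualInsert p (rowPass R w).2).2 ∧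
      ((dualInsert p R).1 ++ (rowPass (dualInsert p R).2 w).1).Perm
        ((rowPass R w).1 ++ (dualInsert p (rowPass R w).2).1) := by
  induction w generalizing R with
  | nil => simp [rowPass]
  | cons q w ih =>
    obtain ⟨hq, hw⟩ := List.forall_mem_cons.1 hw
    obtain ⟨hrow, hout⟩ := rowInsert_dualInsert hq.1 hq.2 R
    obtain ⟨hrow', hout'⟩ := ih hw (rowInsert q R).2
    simp only [rowPass, hrow]
    refine ⟨hrow', ?_⟩
    rw [← List.append_assoc, List.append_assoc (rowInsert q R).1]
    refine (hout.append_right _).trans ?_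
    rw [List.append_assoc]
    exact hout'.append_left _

theorem rowPass_inverseBiword {w : List (ℕ × ℕ)} (hw : w.Pairwise lexLe) :
    rowPass [] (inverseBiword w) =
      (inverseBiword (rowPass [] w).1, (rowPass [] w).2.map Prod.swap) := by
  induction w using List.reverseRecOn with
  | nil => simp [rowPass, inverseBiword, sortLex]
  | append_singleton w p ih =>
    obtain ⟨hw', -, hwp⟩ := List.pairwise_append.1 hw
    obtain ⟨u, v, huv, hupv, hu, hv⟩ := exists_inverseBiword_concat fun x hx =>
      hwp x hx p (List.mem_singleton_self p)
    have hrow : ∀ x ∈ (rowPass [] u).2, x.1 ≤ p.2 ∧ x.2 ≤ p.1 :=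
      forall_mem_rowPass_snd (s := (· ≤ p.2)) (t := (· ≤ p.1)) (by simp) hu
    have hinsert : rowInsert p.swap (rowPass [] u).2 = dualInsert p.swap (rowPass [] u).2 := by
      rw [dualInsert_of_le fun x hx => (hrow x hx).1, rowInsert_of_le fun x hx => (hrow x hx).2]
    obtain ⟨hsnd, hfst⟩ := rowPass_dualInsert (p := p.swap) hv (rowPass [] u).2
    have hsorted := pairwise_rowPass_fst isRow_nil (inverseBiword_pairwise (w ++ [p]))
    have ih := ih hw'
    rw [huv, rowPass_append, Prod.mk.injEq] at ih
    simp only [hupv, rowPass_append, rowPass, hinsert, hsnd, ih.2, dualInsert_map_swap,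
      List.append_nil] at hsorted hfst ⊢
    refine Prod.ext (sortLex_eq ?_ hsorted).symm rfl
    rw [List.map_append]
    refine ((inverseBiword_perm _).symm.append_right _).trans ?_
    rw [← ih.1, List.append_assoc]
    exact (hfst.append_left _).symm

theorem pairedTableau_inverseBiword {w : List (ℕ × ℕ)} (hw : w.Pairwise lexLe) :
    pairedTableau (inverseBiword w) = (pairedTableau w).map (List.map Prod.swap) := by
  induction w using rowPass_induction with
  | nil => simp [pairedTableau_nil, inverseBiword, sortLex]
  | step w hne ih =>
    have hinv : inverseBiword w ≠ [] := fun h => hne <| by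
      simpa [h] using (inverseBiword_perm w).length_eq.symm
    rw [pairedTableau_of_ne_nil hne, pairedTableau_of_ne_nil hinv, rowPass_inverseBiword hw,
      ih (pairwise_rowPass_fst isRow_nil hw), List.map_cons]

theorem rsk_inverseBiword {w : List (ℕ × ℕ)} (hw : w.Pairwise lexLe) :
    rsk (inverseBiword w) = (rsk w).swap := by
  simp [rsk_eq_pairedTableau, pairedTableau_inverseBiword hw, Function.comp_def]

end Symmetry

section ReadingOrder

variable {α β : Type*}

/-- The entries of `l` arranged by the value `1, …, n` of a key, as in the reading words of a
bitableau. -/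
def groupByKey (n : ℕ) (key : α → ℕ) (l : List α) : List α :=
  (List.range n).flatMap fun k => l.filter fun x => decide (key x = k + 1)

theorem groupByKey_perm_filter {key : α → ℕ} {l : List α} (hl : ∀ x ∈ l, 1 ≤ key x) (n : ℕ) :
    (groupByKey n key l).Perm (l.filter fun x => decide (key x ≤ n)) := by
  induction n with
  | zero =>
    simpa [groupByKey] using fun x hx => Nat.one_le_iff_ne_zero.1 (hl x hx)
  | succ n ih =>
    have hsplit := List.filter_append_perm (fun x => decide (key x ≤ n))
      (l.filter fun x => decide (key x ≤ n + 1))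
    have hle : (l.filter fun x => decide (key x ≤ n + 1)).filter (fun x => decide (key x ≤ n)) =
        l.filter fun x => decide (key x ≤ n) := by
      rw [List.filter_filter]
      exact List.filter_congr fun x _ => by grind
    have heq : (l.filter fun x => decide (key x ≤ n + 1)).filter (fun x => !decide (key x ≤ n)) =
        l.filter fun x => decide (key x = n + 1) := by
      rw [List.filter_filter]
      exact List.filter_congr fun x _ => by grind
    rw [hle, heq] at hsplit
    simpa [groupByKey, List.range_succ] using (ih.append_right _).trans hsplit

theorem groupByKey_perm {n : ℕ} {key : α → ℕ} {l : List α}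
    (hl : ∀ x ∈ l, 1 ≤ key x ∧ key x ≤ n) : (groupByKey n key l).Perm l := by
  have hall : l.filter (fun x => decide (key x ≤ n)) = l :=
    List.filter_eq_self.2 fun x hx => by simpa using (hl x hx).2
  simpa [hall] using groupByKey_perm_filter (fun x hx => (hl x hx).1) n

theorem groupByKey_pairwise {r : α → α → Prop} {l : List α} (hl : l.Pairwise r) (n : ℕ)
    (key : α → ℕ) :
    (groupByKey n key l).Pairwise fun x y => key x < key y ∨ (key x = key y ∧ r x y) := by
  refine List.pairwise_flatMap.2 ⟨fun k _ => ?_, List.pairwise_lt_range.imp ?_⟩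
  · refine (hl.filter _).imp_of_mem fun hx hy hxy => .inr ⟨?_, hxy⟩
    simp only [List.mem_filter, decide_eq_true_eq] at hx hy
    omega
  · intro a b hab x hx y hy
    simp only [List.mem_filter, decide_eq_true_eq] at hx hy
    omega

theorem map_groupByKey (n : ℕ) (g : α → β) (key : β → ℕ) (l : List α) :
    (groupByKey n (fun x => key (g x)) l).map g = groupByKey n key (l.map g) := by
  simp [groupByKey, List.map_flatMap, List.filter_map, Function.comp_def]

theorem map_getD_range (l : List α) (d : α) :
    (List.range l.length).map (fun t => l.getD t d) = l :=
  List.ext_getElem (by simp) fun t _ ht => by simp [ht]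

theorem set_getD_eq_modify (l : List α) (t : ℕ) (d : α) (g : α → α) :
    l.set t (g (l.getD t d)) = l.modify t g :=
  List.ext_getElem (by simp) fun k hk _ => by
    by_cases hkt : t = k <;> grind

theorem map_modify {f : α → β} {g : α → α} {g' : β → β} (h : ∀ x, f (g x) = g' (f x))
    (l : List α) (t : ℕ) : (l.modify t g).map f = (l.map f).modify t g' :=
  List.ext_getElem (by simp) fun k hk _ => by
    by_cases hkt : t = k <;> simp [hkt, h]

-- `I` lists the positions of `l` in another reading order.
theorem modify_perm_modify_map_getD {l : List α} {I : List ℕ} (hI : I.Perm (List.range l.length))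
    {p : ℕ} (hp : p < I.length) (d : α) (g : α → α) :
    (l.modify (I.getD p 0) g).Perm ((I.map fun t => l.getD t d).modify p g) := by
  have hnodup : I.Nodup := hI.nodup_iff.2 List.nodup_range
  have hreorder : (I.map fun t => l.getD t d).modify p g =
      I.map fun t => (l.modify (I.getD p 0) g).getD t d := by
    refine List.ext_getElem (by simp) fun k hk hk' => ?_
    have hkI : k < I.length := by simpa using hk'
    have hlt : I[k] < l.length := by simpa using hI.mem_iff.1 (List.getElem_mem hkI)
    have hinj : I[p] = I[k] ↔ p = k := hnodup.getElem_inj_iff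
    simp [List.getElem_modify, hp, hlt, hinj]
  rw [hreorder]
  refine (List.Perm.of_eq ?_).trans (hI.symm.map _)
  simpa using (map_getD_range (l.modify (I.getD p 0) g) d).symm

theorem modify_perm_groupByKey_modify {n : ℕ} {key : α → ℕ} {l : List α} (d : α)
    (hl : ∀ x ∈ l, 1 ≤ key x ∧ key x ≤ n) {p : ℕ} (hp : p < l.length) (g : α → α) :
    (l.modify ((groupByKey n (fun t => key (l.getD t d)) (List.range l.length)).getD p 0) g).Perm
      ((groupByKey n key l).modify p g) := by
  have hI : (groupByKey n (fun t => key (l.getD t d)) (List.range l.length)).Perm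
      (List.range l.length) := groupByKey_perm fun t ht => by
    have ht : t < l.length := List.mem_range.1 ht
    simpa [ht] using hl l[t] (List.getElem_mem ht)
  have := modify_perm_modify_map_getD hI (p := p) (by rwa [hI.length_eq, List.length_range]) d g
  rwa [map_groupByKey n (fun t => l.getD t d), map_getD_range] at this

end ReadingOrder

section Bitableau

variable {n m r : ℕ} {L : List (ℕ × ℕ)}

theorem IsRowBitab.pairwise (hL : IsRowBitab n m r L) : L.Pairwise lexLe :=
  List.isChain_iff_pairwise.1 hL.2.2

theorem IsRowBitab.inverseBiword (hL : IsRowBitab n m r L) :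
    IsRowBitab m n r (inverseBiword L) := by
  refine ⟨?_, fun p hp => ?_, (inverseBiword_pairwise L).isChain⟩
  · simpa [(inverseBiword_perm L).length_eq] using hL.1
  · exact (hL.2.1 p.swap (mem_inverseBiword.1 hp)).symm

theorem isChain_lexLe_of_lowerWord_eq_some {i : ℕ} {w w' : List (ℕ × ℕ)}
    (hw : w.Pairwise lexLe) (h : lowerWord i 0 w = some w') : w'.IsChain lexLe := by
  refine isChain_of_lowerWord_eq_some (fun p a hp => ?_) (fun a q hq hqi => ?_) hw.isChain h
  all_goals
    simp only [lexLe] at *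
    omega

theorem IsRowBitab.of_lowerWord_eq_some {i : ℕ} {L' : List (ℕ × ℕ)} (hL : IsRowBitab n m r L)
    (hi : i + 1 ≤ m) (h : lowerWord i 0 L = some L') : IsRowBitab n m r L' := by
  have hchain := isChain_lexLe_of_lowerWord_eq_some hL.pairwise h
  obtain ⟨u, a, v, rfl, rfl, -⟩ := exists_of_lowerWord_eq_some h
  obtain ⟨hlen, hmem, -⟩ := hL
  refine ⟨by simpa using hlen, ?_, hchain⟩
  simp only [List.forall_mem_append, List.forall_mem_cons] at hmem ⊢
  exact ⟨hmem.1, ⟨hmem.2.1.1, Nat.le_add_left 1 i, hi⟩, hmem.2.2⟩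

theorem Fbot_eq_lowerWord (hL : IsRowBitab n m r L) (i : ℕ) : Fbot n i L = lowerWord i 0 L := by
  have hkey : ∀ p ∈ L, 1 ≤ p.1 ∧ p.1 ≤ n := fun p hp => (hL.2.1 p hp).1
  have hgroup : groupByKey n Prod.fst L = L := by
    refine (groupByKey_perm hkey).eq_of_pairwise' ?_ hL.pairwise
    refine (groupByKey_pairwise hL.pairwise n Prod.fst).imp fun {p q} hpq => ?_
    unfold lexLe at *
    omega
  have hword : wRow n L = L.map Prod.snd := by
    conv_rhs => rw [← hgroup]
    simp [wRow, groupByKey, List.map_flatMap]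
  have hlower := lowerWord_eq_map_rightUnmatched i L
  rw [Fbot, hword]
  rcases hp : rightUnmatched (L.map Prod.snd) i with _ | p
  · simpa [hp] using hlower.symm
  · rw [hp, Option.map_some] at hlower
    have hperm := modify_perm_groupByKey_modify (0, 0) hkey (p := p)
      (by simpa using lt_length_of_rightUnmatched_eq_some hp) fun q => (q.1, i + 1)
    rw [hgroup, ← set_getD_eq_modify _ _ (0, 0)] at hperm
    rw [hlower]
    exact congrArg some
      (sortLex_eq hperm (isChain_lexLe_of_lowerWord_eq_some hL.pairwise hlower).pairwise)

theorem Ftop_eq_map_lowerWord (hL : IsRowBitab n m r L) (j : ℕ) :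
    Ftop m j L = (lowerWord j 0 (inverseBiword L)).map inverseBiword := by
  have hkey : ∀ p ∈ L, 1 ≤ p.2 ∧ p.2 ≤ m := fun p hp => (hL.2.1 p hp).2
  have hgroup : groupByKey m Prod.snd L = (inverseBiword L).map Prod.swap := by
    suffices inverseBiword L = (groupByKey m Prod.snd L).map Prod.swap by simp [this]
    refine sortLex_eq ((groupByKey_perm hkey).symm.map _) (List.pairwise_map.2 ?_)
    refine (groupByKey_pairwise hL.pairwise m Prod.snd).imp fun {p q} hpq => ?_
    simp only [lexLe, Prod.fst_swap, Prod.snd_swap] at *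
    omega
  have hword : uRow m L = (inverseBiword L).map Prod.snd := by
    have := congrArg (List.map Prod.fst) hgroup
    simpa [uRow, groupByKey, List.map_flatMap, Function.comp_def] using this
  rw [Ftop, hword, lowerWord_eq_map_rightUnmatched]
  rcases hp : rightUnmatched ((inverseBiword L).map Prod.snd) j with _ | p
  · rfl
  · have hlen : p < L.length := by
      simpa [(inverseBiword_perm L).length_eq] using lt_length_of_rightUnmatched_eq_some hp
    have hperm := modify_perm_groupByKey_modify (0, 0) hkey hlen fun q => (j + 1, q.2)
    rw [hgroup, ← set_getD_eq_modify _ _ (0, 0)] at hperm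
    have hswap := map_modify (f := Prod.swap) (g := fun q => (q.1, j + 1))
      (g' := fun q => (j + 1, q.2)) (fun _ => rfl) (inverseBiword L) p
    refine congrArg some (sortLex_eq (hperm.trans ?_) (inverseBiword_pairwise _))
    rw [← hswap]
    exact (inverseBiword_perm _).symm

end Bitableau

/-- RSK intertwines the crystal lowering operators on one-row bitableaux with
the standard tableau lowering operators: `F_i^b(T)` is defined iff `f_i(P)` is, in which case
`F_i^b(T) ∈ B_{(r)}(n,m)` and `RSK(F_i^b(T)) = (f_i(P), Q)`; and `F_j^t(T)` is defined iff
`f_j(Q)` is, in which case `F_j^t(T) ∈ B_{(r)}(n,m)` and `RSK(F_j^t(T)) = (P, f_j(Q))`.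
(Thus RSK is an isomorphism of `gl_n × gl_m`-crystals on one-row bitableaux.) -/
theorem stmt_8 (n m r : ℕ) (hn : 1 ≤ n) (hm : 1 ≤ m)
    (L : List (ℕ × ℕ)) (hL : IsRowBitab n m r L)
    (i : ℕ) (hi1 : 1 ≤ i) (hi2 : i ≤ m - 1)
    (j : ℕ) (hj1 : 1 ≤ j) (hj2 : j ≤ n - 1) :
    ((Fbot n i L).isSome ↔ (fLower i (rsk L).1).isSome) ∧
    (∀ L', Fbot n i L = some L' →
      IsRowBitab n m r L' ∧
      ∃ P', fLower i (rsk L).1 = some P' ∧ rsk L' = (P', (rsk L).2)) ∧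
    ((Ftop m j L).isSome ↔ (fLower j (rsk L).2).isSome) ∧
    (∀ L', Ftop m j L = some L' →
      IsRowBitab n m r L' ∧
      ∃ Q', fLower j (rsk L).2 = some Q' ∧ rsk L' = ((rsk L).1, Q')) := by
  have htop : fLower j (rsk L).2 =
      (lowerWord j 0 (inverseBiword L)).map fun w => (rsk w).1 := by
    rw [← fLower_rsk_fst, rsk_inverseBiword hL.pairwise, Prod.fst_swap]
  rw [Fbot_eq_lowerWord hL, Ftop_eq_map_lowerWord hL, fLower_rsk_fst, htop]
  refine ⟨by simp, fun L' hL' => ?_, by simp, fun L' hL' => ?_⟩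
  · exact ⟨hL.of_lowerWord_eq_some (by omega) hL', (rsk L').1, by simp [hL'],
      Prod.ext rfl (rsk_snd_of_lowerWord_eq_some hL')⟩
  · obtain ⟨w, hw, rfl⟩ := Option.map_eq_some_iff.1 hL'
    have hw_mem := hL.inverseBiword.of_lowerWord_eq_some (by omega) hw
    have hrow : (rsk w).2 = (rsk L).1 := by
      rw [rsk_snd_of_lowerWord_eq_some hw, rsk_inverseBiword hL.pairwise, Prod.snd_swap]
    refine ⟨hw_mem.inverseBiword, (rsk w).1, by simp [hw], ?_⟩
    rw [rsk_inverseBiword hw_mem.pairwise]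
    exact Prod.ext hrow rfl
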